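/- Let f : [0,1]² → [0,∞) be a bounded Borel measurable function. Then the supremum over φ ∈ D* of ∫₀¹ sqrt(φ'(x))·f(x, φ(x)) dx equals the supremum over pairs (γ₁,γ₂) ∈ Γ̄ × Γ̄ of ∫₀¹ sqrt(γ₁'(u)·γ₂'(u))·f(γ₁(u),γ₂(u)) du. Moreover, for every φ ∈ D* there exists a pair (γ₁,γ₂) ∈ Γ̄ × Γ̄ for which the two integrals are equal, and conversely for every pair (γ₁,γ₂) ∈ Γ̄ × Γ̄ there exists φ ∈ D* for which the two integrals are equal. -/

import Mathlib

/-!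
A pair `(Γ₁, Γ₂)` of absolutely continuous functions is sent to the distribution function `φ` of the
measure `μ = (Γ₁)_* dΓ₂`, and this correspondence preserves the energy
(`IsUnitDensity.singleEnergy_eq`). Indeed `φ(Γ₁ u)` is the `dΓ₂`-mass of `{Γ₁ < Γ₁ u}`, hence is at
most `Γ₂ u`, with equality wherever `Γ₁'(u) > 0`. At almost every such `u` the function
`Γ₂ - φ ∘ Γ₁` is differentiable and attains its minimum `0`, so `Γ₂' = φ'(Γ₁) Γ₁'` and
`sqrt (Γ₁' Γ₂') = Γ₁' sqrt (φ'(Γ₁))`. The change of variables `x = Γ₁(u)`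
(`IsUnitDensity.map_prim`) then turns one integral into the other.

Every `φ ∈ D*` arises in this way (`exists_densities`). Given the measure `μ` of `φ`, let `Q` be the
quantile function of `m = (Leb + μ) / 2`, so that `Q` transports the Lebesgue measure of `[0,1]` to
`m`. Both `Leb` and `μ` are absolutely continuous with respect to `m`; let `g₁` and `g₂` be their
densities composed with `Q`. Then `Q` transports `g₁ du` to `Leb` and `g₂ du` to `μ`, and the first
fact forces `Q` to be the primitive of `g₁`.

The two sets of values therefore coincide, and so do their suprema.
-/

open MeasureTheory Set
open scoped Classical

/-- The semigroup `Γ̄` of absolutely continuous non-decreasing surjections of `[0,1]`: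
`γ(x) = ∫₀ˣ g` for some non-negative integrable `g` with `∫₀¹ g = 1`. -/
def GammaBar : Set (ℝ → ℝ) :=
  {γ | ∃ g : ℝ → ℝ, (∀ u, 0 ≤ g u) ∧ IntegrableOn g (Icc 0 1) ∧
    (∫ u in Icc (0:ℝ) 1, g u) = 1 ∧ ∀ x ∈ Icc (0:ℝ) 1, γ x = ∫ u in Icc (0:ℝ) x, g u}

/-- The set `D*` of cumulative distribution functions `φ(s) = μ([0,s))` of probability
measures `μ` on `[0,1]`. -/
def DStar : Set (ℝ → ℝ) :=
  {φ | ∃ μ : Measure ℝ, IsProbabilityMeasure μ ∧ μ (Icc (0:ℝ) 1)ᶜ = 0 ∧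
    ∀ s : ℝ, φ s = (μ (Ico (0:ℝ) s)).toReal}

/-- The matching functional `(γ₁,γ₂) ↦ ∫₀¹ sqrt(γ₁'(u)·γ₂'(u))·f(γ₁(u),γ₂(u)) du`. -/
noncomputable def pairEnergy (f : ℝ → ℝ → ℝ) (γ₁ γ₂ : ℝ → ℝ) : ℝ :=
  ∫ u in Icc (0:ℝ) 1, Real.sqrt (deriv γ₁ u * deriv γ₂ u) * f (γ₁ u) (γ₂ u)

/-- The matching functional `φ ↦ ∫₀¹ sqrt(φ'(x))·f(x,φ(x)) dx`. -/
noncomputable def singleEnergy (f : ℝ → ℝ → ℝ) (φ : ℝ → ℝ) : ℝ :=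
  ∫ x in Icc (0:ℝ) 1, Real.sqrt (deriv φ x) * f x (φ x)

open Filter Topology

/-! ### Densities and their primitives -/

/-- `g` is a Borel probability density on the line, supported in `[0,1]`. -/
structure IsUnitDensity (g : ℝ → ℝ) : Prop where
  meas : Measurable g
  nonneg : ∀ u, 0 ≤ g u
  supp : ∀ u, u ∉ Icc (0:ℝ) 1 → g u = 0
  int : Integrable g
  one : ∫ u, g u = 1

/-- The primitive `x ↦ ∫_{-∞}^x g`, defined on the whole line. -/
noncomputable def prim (g : ℝ → ℝ) (x : ℝ) : ℝ := ∫ t in Iic x, g t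

/-- The measure `g(u) du`. -/
noncomputable def densMeasure (g : ℝ → ℝ) : Measure ℝ :=
  volume.withDensity (fun u => ENNReal.ofReal (g u))

namespace IsUnitDensity

variable {g : ℝ → ℝ} (hg : IsUnitDensity g)

include hg

lemma densMeasure_Iic (x : ℝ) : densMeasure g (Iic x) = ENNReal.ofReal (prim g x) := by
  rw [densMeasure, withDensity_apply _ measurableSet_Iic, prim,
    ofReal_integral_eq_lintegral_ofReal hg.int.integrableOn (ae_of_all _ hg.nonneg)]

lemma isProbabilityMeasure : IsProbabilityMeasure (densMeasure g) := by
  constructor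
  rw [densMeasure, withDensity_apply _ MeasurableSet.univ, Measure.restrict_univ,
    ← ofReal_integral_eq_lintegral_ofReal hg.int (ae_of_all _ hg.nonneg), hg.one,
    ENNReal.ofReal_one]

lemma prim_nonneg (x : ℝ) : 0 ≤ prim g x :=
  integral_nonneg hg.nonneg

lemma prim_eq_real (x : ℝ) : prim g x = (densMeasure g).real (Iic x) := by
  rw [measureReal_def, hg.densMeasure_Iic, ENNReal.toReal_ofReal (hg.prim_nonneg x)]

lemma prim_mono : Monotone (prim g) := by
  have := hg.isProbabilityMeasure
  intro x y hxy
  rw [hg.prim_eq_real, hg.prim_eq_real]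
  exact measureReal_mono (Iic_subset_Iic.2 hxy)

lemma prim_le_one (x : ℝ) : prim g x ≤ 1 := by
  have := hg.isProbabilityMeasure
  rw [hg.prim_eq_real]
  exact measureReal_le_one

lemma prim_eq_interval (x : ℝ) : prim g x = prim g 0 + ∫ t in (0:ℝ)..x, g t := by
  rw [← intervalIntegral.integral_Iic_sub_Iic hg.int.integrableOn hg.int.integrableOn]
  simp [prim]

lemma continuous_prim : Continuous (prim g) := by
  rw [funext hg.prim_eq_interval]
  exact continuous_const.add
    (intervalIntegral.continuous_primitive (fun a b => hg.int.intervalIntegrable) 0)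

/-- Lebesgue's differentiation theorem for the primitive. -/
lemma ae_hasDerivAt : ∀ᵐ x, HasDerivAt (prim g) (g x) x := by
  filter_upwards [LocallyIntegrable.ae_hasDerivAt_integral hg.int.locallyIntegrable] with x hx
  rw [funext hg.prim_eq_interval]
  exact (hx 0).const_add _

lemma prim_zero : prim g 0 = 0 := by
  rw [prim, integral_Iic_eq_integral_Iio]
  exact setIntegral_eq_zero_of_forall_eq_zero fun x hx => hg.supp x fun h => absurd h.1 (not_le.2 hx)

lemma prim_one : prim g 1 = 1 := by
  refine Eq.trans ?_ hg.one
  exact setIntegral_eq_integral_of_forall_compl_eq_zero fun x hx => hg.supp x fun h => hx h.2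

lemma prim_eq_Icc {x : ℝ} : prim g x = ∫ u in Icc (0:ℝ) x, g u := by
  have : ∀ u ∈ Iic x, u ∉ Icc 0 x → g u = 0 := fun u hu h =>
    hg.supp u fun h' => h ⟨h'.1, hu⟩
  exact (setIntegral_eq_of_subset_of_forall_sdiff_eq_zero measurableSet_Iic Icc_subset_Iic_self
    fun u hu => this u hu.1 hu.2)

lemma mem_gammaBar : prim g ∈ GammaBar :=
  ⟨g, hg.nonneg, hg.int.integrableOn, by rw [← hg.prim_eq_Icc, hg.prim_one],
    fun _ _ => hg.prim_eq_Icc⟩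

/-- Change of variables for an absolutely continuous monotone function `Γ`, in measure form:
`Γ` transports `Γ'(u) du` to the Lebesgue measure of `[0,1]`. -/
lemma map_prim : (densMeasure g).map (prim g) = volume.restrict (Icc (0:ℝ) 1) := by
  have := hg.isProbabilityMeasure
  have := Measure.isProbabilityMeasure_map (μ := densMeasure g)
    hg.continuous_prim.measurable.aemeasurable
  refine Measure.ext_of_Iic _ _ fun y => ?_
  rw [Measure.map_apply hg.continuous_prim.measurable measurableSet_Iic,
    Measure.restrict_apply measurableSet_Iic]
  rcases lt_or_ge y 0 with hy0 | hy0
  · have h1 : prim g ⁻¹' Iic y = ∅ := by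
      ext u
      simpa using hy0.trans_le (hg.prim_nonneg u)
    have h2 : Iic y ∩ Icc (0:ℝ) 1 = ∅ := by
      ext u
      simp only [mem_inter_iff, mem_Iic, mem_Icc, mem_empty_iff_false, iff_false]
      intro h
      linarith [h.1, h.2.1]
    simp [h1, h2]
  rcases le_or_gt 1 y with hy1 | hy1
  · have h1 : prim g ⁻¹' Iic y = univ := by
      ext u
      simpa using (hg.prim_le_one u).trans hy1
    have h2 : Iic y ∩ Icc (0:ℝ) 1 = Icc 0 1 :=
      inter_eq_right.2 fun u hu => hu.2.trans hy1
    simp [h1, h2]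
  -- The sublevel set is `Iic w`, with `w` the largest solution of `prim g w = y`.
  have hclosed : IsClosed (prim g ⁻¹' Iic y) := isClosed_Iic.preimage hg.continuous_prim
  have hb : BddAbove (prim g ⁻¹' Iic y) := ⟨1, fun u hu => by
    by_contra! h
    have := hg.prim_mono h.le
    rw [hg.prim_one] at this
    exact absurd (this.trans hu) (not_le.2 hy1)⟩
  have hne : (prim g ⁻¹' Iic y).Nonempty := ⟨0, by simpa [hg.prim_zero] using hy0⟩
  have hw := hclosed.csSup_mem hne hb
  set w := sSup (prim g ⁻¹' Iic y) with hwdef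
  have hset : prim g ⁻¹' Iic y = Iic w := by
    ext u
    exact ⟨fun hu => le_csSup hb hu, fun hu => (hg.prim_mono hu).trans hw⟩
  obtain ⟨v, -, hv⟩ := intermediate_value_Icc zero_le_one
    (hg.continuous_prim.continuousOn (s := Icc 0 1))
    (show y ∈ Icc (prim g 0) (prim g 1) by rw [hg.prim_zero, hg.prim_one]; exact ⟨hy0, hy1.le⟩)
  have hvw : v ≤ w := le_csSup hb (by simp [hv])
  have hpw : prim g w = y := le_antisymm hw (hv ▸ hg.prim_mono hvw)
  have h2 : Iic y ∩ Icc (0:ℝ) 1 = Icc 0 y := by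
    ext u
    simp only [mem_inter_iff, mem_Iic, mem_Icc]
    constructor
    · intro h; exact ⟨h.2.1, h.1⟩
    · intro h; exact ⟨h.2, h.1, h.2.trans hy1.le⟩
  rw [hset, hg.densMeasure_Iic, hpw, h2, Real.volume_Icc, sub_zero]

/-- A primitive is strictly increasing to the left of a point where its derivative is positive. -/
lemma prim_lt_of_hasDerivAt {u v : ℝ} (hu : HasDerivAt (prim g) (g u) u) (hpos : 0 < g u)
    (hvu : v < u) : prim g v < prim g u := by
  refine lt_of_le_of_ne (hg.prim_mono hvu.le) fun heq => ?_
  have hconst : ∀ w ∈ Icc v u, prim g w = prim g u := fun w hw =>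
    le_antisymm (hg.prim_mono hw.2) (heq ▸ hg.prim_mono hw.1)
  have h0 : HasDerivWithinAt (prim g) 0 (Icc v u) u :=
    (hasDerivWithinAt_const u (Icc v u) (prim g u)).congr hconst rfl
  have := (uniqueDiffOn_Icc hvu u (right_mem_Icc.2 hvu.le)).eq_deriv _ hu.hasDerivWithinAt h0
  exact hpos.ne' this

end IsUnitDensity

/-! ### Equality of the energies -/

lemma IsUnitDensity.map_mem_dStar {g₁ g₂ φ : ℝ → ℝ} (h₁ : IsUnitDensity g₁)
    (h₂ : IsUnitDensity g₂)
    (hφ : ∀ s, φ s = (((densMeasure g₂).map (prim g₁)) (Ico (0:ℝ) s)).toReal) : φ ∈ DStar := by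
  have := h₂.isProbabilityMeasure
  refine ⟨_, Measure.isProbabilityMeasure_map h₁.continuous_prim.measurable.aemeasurable, ?_, hφ⟩
  rw [Measure.map_apply h₁.continuous_prim.measurable measurableSet_Icc.compl]
  have : prim g₁ ⁻¹' (Icc 0 1)ᶜ = ∅ := by
    ext u
    simpa using ⟨h₁.prim_nonneg u, h₁.prim_le_one u⟩
  simp [this]

/-- Equality of the energies of `(Γ₁, Γ₂)` and of the distribution function `φ` of `(Γ₁)_* dΓ₂`.
The function `φ ∘ Γ₁` lies below `Γ₂` and touches it at almost every point where `Γ₁' > 0`, so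
that `φ'(Γ₁) Γ₁' = Γ₂'` there; the change of variables `x = Γ₁(u)` then gives the result. -/
lemma IsUnitDensity.singleEnergy_eq (f : ℝ → ℝ → ℝ) (hf : Measurable (Function.uncurry f))
    {g₁ g₂ φ : ℝ → ℝ} (h₁ : IsUnitDensity g₁) (h₂ : IsUnitDensity g₂)
    (hφ : ∀ s, φ s = (((densMeasure g₂).map (prim g₁)) (Ico (0:ℝ) s)).toReal) :
    singleEnergy f φ = pairEnergy f (prim g₁) (prim g₂) := by
  have := h₂.isProbabilityMeasure
  have hm₁ := h₁.continuous_prim.measurable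
  have hφ' : ∀ s, φ s = (densMeasure g₂).real {u | prim g₁ u < s} := by
    intro s
    rw [hφ, Measure.map_apply hm₁ measurableSet_Ico, measureReal_def]
    congr 2
    ext u
    simp [h₁.prim_nonneg u]
  have hmono : Monotone φ := by
    intro s t hst
    rw [hφ', hφ']
    exact measureReal_mono fun u (hu : prim g₁ u < s) => hu.trans_le hst
  have hle : ∀ u, φ (prim g₁ u) ≤ prim g₂ u := by
    intro u
    rw [hφ', h₂.prim_eq_real]
    exact measureReal_mono fun v hv => (h₁.prim_mono.reflect_lt hv).le
  have htouch : ∀ u, HasDerivAt (prim g₁) (g₁ u) u → 0 < g₁ u → φ (prim g₁ u) = prim g₂ u := by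
    intro u hu hpos
    refine le_antisymm (hle u) ?_
    have hIio : (densMeasure g₂) (Iio u) = (densMeasure g₂) (Iic u) := by
      rw [densMeasure, withDensity_apply _ measurableSet_Iic, withDensity_apply _ measurableSet_Iio]
      rw [Measure.restrict_congr_set Iio_ae_eq_Iic]
    rw [h₂.prim_eq_real, hφ', measureReal_def, ← hIio, ← measureReal_def]
    exact measureReal_mono fun v hv => h₁.prim_lt_of_hasDerivAt hu hpos hv
  -- Points `u` with `Γ₁'(u) > 0` whose image is a non-differentiability point of `φ` are negligible.
  have hdiff : ∀ᵐ u, 0 < g₁ u → DifferentiableAt ℝ φ (prim g₁ u) := by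
    have h : ∀ᵐ x ∂((densMeasure g₁).map (prim g₁)), DifferentiableAt ℝ φ x := by
      rw [h₁.map_prim]
      exact ae_restrict_of_ae hmono.ae_differentiableAt
    have h' := ae_of_ae_map hm₁.aemeasurable h
    rw [densMeasure, ae_withDensity_iff (by have := h₁.meas; fun_prop)] at h'
    filter_upwards [h'] with u hu hpos
    exact hu (by simpa using hpos)
  set h : ℝ → ℝ := fun x => Real.sqrt (deriv φ x) * f x (φ x) with hdef
  have hh : Measurable h := by
    have h1 := measurable_deriv φ
    have h2 : Measurable fun x => f x (φ x) := hf.comp (measurable_id.prodMk hmono.measurable)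
    exact h1.sqrt.mul h2
  have hgm : Measurable fun u => (g₁ u).toNNReal := h₁.meas.real_toNNReal
  have step : singleEnergy f φ = ∫ u, g₁ u * h (prim g₁ u) := by
    rw [singleEnergy, ← h₁.map_prim, integral_map hm₁.aemeasurable hh.aestronglyMeasurable]
    change ∫ u, h (prim g₁ u) ∂(volume.withDensity fun u => ((g₁ u).toNNReal : ENNReal)) = _
    rw [integral_withDensity_eq_integral_smul hgm]
    refine integral_congr_ae (ae_of_all _ fun u => ?_)
    simp [NNReal.smul_def, Real.coe_toNNReal _ (h₁.nonneg u)]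
  rw [step, pairEnergy, ← integral_indicator measurableSet_Icc]
  refine integral_congr_ae ?_
  filter_upwards [hdiff, h₁.ae_hasDerivAt, h₂.ae_hasDerivAt] with u hu hd₁ hd₂
  by_cases hI : u ∈ Icc (0:ℝ) 1
  swap
  · simp [hI, h₁.supp u hI]
  rw [indicator_of_mem hI, hd₁.deriv, hd₂.deriv]
  rcases (h₁.nonneg u).eq_or_lt with h0 | hpos
  · simp [← h0]
  have ht := htouch u hd₁ hpos
  have hmin : IsLocalMin (fun v => prim g₂ v - φ (prim g₁ v)) u :=
    Eventually.of_forall fun v => by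
      have := hle v
      simp only [ht]
      linarith
  have hcomp := (hu hpos).hasDerivAt.comp u hd₁
  have hz := hmin.hasDerivAt_eq_zero (hd₂.sub hcomp)
  have hg₂ : g₁ u * g₂ u = g₁ u ^ 2 * deriv φ (prim g₁ u) := by
    linear_combination g₁ u * hz
  rw [hg₂, Real.sqrt_mul (sq_nonneg _), Real.sqrt_sq hpos.le, hdef]
  simp only [ht]
  ring

lemma exists_density_of_mem_gammaBar {γ : ℝ → ℝ} (hγ : γ ∈ GammaBar) :
    ∃ g, IsUnitDensity g ∧ ∀ x ∈ Icc (0:ℝ) 1, γ x = prim g x := by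
  obtain ⟨g, hpos, hint, hone, hγ⟩ := hγ
  have hsm := hint.aestronglyMeasurable
  set g' : ℝ → ℝ := (Icc (0:ℝ) 1).indicator fun u => max (hsm.mk g u) 0 with hg'
  have hae : ∀ᵐ u ∂(volume.restrict (Icc (0:ℝ) 1)), g u = g' u := by
    filter_upwards [hsm.ae_eq_mk, ae_restrict_mem measurableSet_Icc] with u hu hI
    rw [hg', indicator_of_mem hI, ← hu, max_eq_left (hpos u)]
  have hd : IsUnitDensity g' := by
    have hmeas : Measurable g' :=
      (hsm.stronglyMeasurable_mk.measurable.max measurable_const).indicator measurableSet_Icc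
    refine ⟨hmeas, fun u => indicator_nonneg (fun _ _ => le_max_right _ _) u,
      fun u hu => indicator_of_notMem hu _, ?_, ?_⟩
    · rw [← integrableOn_iff_integrable_of_support_subset (s := Icc (0:ℝ) 1)
        support_indicator_subset]
      exact hint.congr hae
    · rw [← hone, integral_congr_ae hae]
      exact (setIntegral_eq_integral_of_forall_compl_eq_zero
        fun u hu => indicator_of_notMem hu _).symm
  refine ⟨g', hd, fun x hx => ?_⟩
  rw [hγ x hx, hd.prim_eq_Icc]
  exact integral_congr_ae (ae_restrict_of_ae_restrict_of_subset (Icc_subset_Icc_right hx.2) hae)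

lemma pairEnergy_congr (f : ℝ → ℝ → ℝ) {γ₁ γ₂ γ₁' γ₂' : ℝ → ℝ}
    (h₁ : ∀ x ∈ Icc (0:ℝ) 1, γ₁ x = γ₁' x) (h₂ : ∀ x ∈ Icc (0:ℝ) 1, γ₂ x = γ₂' x) :
    pairEnergy f γ₁ γ₂ = pairEnergy f γ₁' γ₂' := by
  rw [pairEnergy, pairEnergy, integral_Icc_eq_integral_Ioo, integral_Icc_eq_integral_Ioo]
  refine setIntegral_congr_fun measurableSet_Ioo fun u hu => ?_
  have hn : Icc (0:ℝ) 1 ∈ 𝓝 u := Icc_mem_nhds hu.1 hu.2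
  have e₁ : γ₁ =ᶠ[𝓝 u] γ₁' := eventually_of_mem hn h₁
  have e₂ : γ₂ =ᶠ[𝓝 u] γ₂' := eventually_of_mem hn h₂
  simp only [e₁.deriv_eq, e₂.deriv_eq, e₁.eq_of_nhds, e₂.eq_of_nhds]

/-! ### Quantile functions and the parametrization of a distribution function -/

lemma restrict_Iic {c : ℝ} (h1 : c ≤ 1) :
    (volume.restrict (Icc (0:ℝ) 1)) (Iic c) = ENNReal.ofReal c := by
  have : Iic c ∩ Icc (0:ℝ) 1 = Icc 0 c := by
    ext u
    simp only [mem_inter_iff, mem_Iic, mem_Icc]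
    exact ⟨fun h => ⟨h.2.1, h.1⟩, fun h => ⟨h.2, h.1, h.2.trans h1⟩⟩
  rw [Measure.restrict_apply measurableSet_Iic, this, Real.volume_Icc, sub_zero]

/-- The quantile function of a probability measure on `[0,1]`. The alternative `1 ≤ x` makes the
infimum meaningful, with value in `[0,1]`, for every real `u`. -/
noncomputable def quantile (m : Measure ℝ) (u : ℝ) : ℝ :=
  sInf {x | 0 ≤ x ∧ (u ≤ ProbabilityTheory.cdf m x ∨ 1 ≤ x)}

lemma quantile_bddBelow (m : Measure ℝ) (u : ℝ) :
    BddBelow {x | 0 ≤ x ∧ (u ≤ ProbabilityTheory.cdf m x ∨ 1 ≤ x)} := ⟨0, fun _ hx => hx.1⟩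

lemma quantile_nonneg (m : Measure ℝ) (u : ℝ) : 0 ≤ quantile m u :=
  Real.sInf_nonneg fun _ hx => hx.1

lemma quantile_le_one (m : Measure ℝ) (u : ℝ) : quantile m u ≤ 1 :=
  csInf_le (quantile_bddBelow m u) ⟨zero_le_one, Or.inr le_rfl⟩

lemma quantile_mono (m : Measure ℝ) : Monotone (quantile m) := fun u _ huv =>
  csInf_le_csInf (quantile_bddBelow m u) ⟨1, zero_le_one, Or.inr le_rfl⟩
    fun _ hx => ⟨hx.1, hx.2.imp_left huv.trans⟩

/-- The Galois connection between the quantile function and the distribution function. -/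
lemma quantile_le_iff (m : Measure ℝ) {u y : ℝ} (h0 : 0 ≤ y) (h1 : y < 1) :
    quantile m u ≤ y ↔ u ≤ ProbabilityTheory.cdf m y := by
  refine ⟨fun h => ?_, fun h => csInf_le (quantile_bddBelow m u) ⟨h0, Or.inl h⟩⟩
  by_contra! hlt
  -- By right-continuity the strict inequality persists up to some `z > y`.
  have hr : Tendsto (ProbabilityTheory.cdf m) (𝓝[>] y) (𝓝 (ProbabilityTheory.cdf m y)) :=
    ((ProbabilityTheory.cdf m).right_continuous y).mono_left (nhdsWithin_mono _ Ioi_subset_Ici_self)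
  obtain ⟨z, hz, hzy⟩ := ((hr.eventually (gt_mem_nhds hlt)).and (Ioo_mem_nhdsGT h1)).exists
  have : z ≤ quantile m u := by
    refine le_csInf ⟨1, zero_le_one, Or.inr le_rfl⟩ fun x hx => ?_
    by_contra! hxz
    rcases hx.2 with h' | h'
    · exact absurd (h'.trans (ProbabilityTheory.monotone_cdf m hxz.le)) (not_le.2 hz)
    · linarith [hzy.2]
  linarith [hzy.1]

lemma map_quantile (m : Measure ℝ) [IsProbabilityMeasure m] (hm : m (Icc (0:ℝ) 1)ᶜ = 0) :
    (volume.restrict (Icc (0:ℝ) 1)).map (quantile m) = m := by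
  have hQ := (quantile_mono m).measurable
  refine Measure.ext_of_Iic _ _ fun y => ?_
  rw [Measure.map_apply hQ measurableSet_Iic]
  rcases lt_or_ge y 0 with hy0 | hy0
  · have h1 : quantile m ⁻¹' Iic y = ∅ := by
      ext u
      simpa using hy0.trans_le (quantile_nonneg m u)
    have h2 : m (Iic y) = 0 :=
        measure_mono_null (show Iic y ⊆ (Icc (0:ℝ) 1)ᶜ from fun u hu h =>
        absurd h.1 (not_le.2 (lt_of_le_of_lt hu hy0))) hm
    rw [h1, h2, measure_empty]
  rcases le_or_gt 1 y with hy1 | hy1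
  · have h1 : quantile m ⁻¹' Iic y = univ := by
      ext u
      simpa using (quantile_le_one m u).trans hy1
    have h2 : m (Iic y)ᶜ = 0 :=
      measure_mono_null (fun u (hu : ¬ u ≤ y) (h : u ∈ Icc (0:ℝ) 1) => hu (h.2.trans hy1)) hm
    rw [h1, (prob_compl_eq_zero_iff measurableSet_Iic).1 h2]
    simp
  have h1 : quantile m ⁻¹' Iic y = Iic (ProbabilityTheory.cdf m y) := by
    ext u
    exact quantile_le_iff m hy0 hy1
  rw [h1, restrict_Iic (ProbabilityTheory.cdf_le_one m y),
    ProbabilityTheory.ofReal_cdf]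

/-- If `Q` transports the Lebesgue measure of `[0,1]` to `m`, then every probability measure
`κ ≪ m` is the image under `Q` of the density `(dκ/dm) ∘ Q` on `[0,1]`. -/
lemma exists_density_map_eq {Q : ℝ → ℝ} (hQ : Measurable Q) {m κ : Measure ℝ}
    [IsProbabilityMeasure m] [IsProbabilityMeasure κ]
    (hm : (volume.restrict (Icc (0:ℝ) 1)).map Q = m) (hκ : κ ≪ m) :
    ∃ g, IsUnitDensity g ∧ (densMeasure g).map Q = κ := by
  set ρ := κ.rnDeriv m with hρ
  have hρm : Measurable ρ := Measure.measurable_rnDeriv κ m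
  set g : ℝ → ℝ := (Icc (0:ℝ) 1).indicator fun u => (ρ (Q u)).toReal with hg
  have hgm : Measurable g := (hρm.comp hQ).ennreal_toReal.indicator measurableSet_Icc
  have hg0 : ∀ u, 0 ≤ g u := fun u => indicator_nonneg (fun _ _ => ENNReal.toReal_nonneg) u
  have hfin : ∀ᵐ u ∂(volume.restrict (Icc (0:ℝ) 1)), ρ (Q u) < ⊤ := by
    have h := Measure.rnDeriv_lt_top κ m
    rw [← hρ, ← hm] at h
    exact ae_of_ae_map hQ.aemeasurable h
  have hdens : densMeasure g = (volume.restrict (Icc (0:ℝ) 1)).withDensity (ρ ∘ Q) := by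
    rw [← withDensity_indicator measurableSet_Icc, densMeasure]
    refine withDensity_congr_ae ?_
    filter_upwards [(ae_restrict_iff' measurableSet_Icc).1 hfin] with u hu
    by_cases hI : u ∈ Icc (0:ℝ) 1
    · simp only [hg, indicator_of_mem hI, Function.comp]
      exact ENNReal.ofReal_toReal (hu hI).ne
    · simp [hg, indicator_of_notMem hI]
  have hmap : (densMeasure g).map Q = κ := by
    ext A hA
    rw [Measure.map_apply hQ hA, hdens, withDensity_apply _ (hQ hA)]
    simp only [Function.comp]
    rw [← setLIntegral_map hA hρm hQ, hm, Measure.setLIntegral_rnDeriv hκ]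
  have hlint : ∫⁻ u, ENNReal.ofReal (g u) = 1 := by
    have : densMeasure g univ = 1 := by
      rw [← preimage_univ (f := Q), ← Measure.map_apply hQ MeasurableSet.univ, hmap, measure_univ]
    rwa [densMeasure, withDensity_apply _ MeasurableSet.univ, Measure.restrict_univ] at this
  refine ⟨g, ⟨hgm, hg0, fun u hu => indicator_of_notMem hu _, ?_, ?_⟩, hmap⟩
  · refine ⟨hgm.aestronglyMeasurable, ?_⟩
    rw [hasFiniteIntegral_iff_ofReal (ae_of_all _ hg0), hlint]
    exact ENNReal.one_lt_top
  · rw [integral_eq_lintegral_of_nonneg_ae (ae_of_all _ hg0) hgm.aestronglyMeasurable, hlint,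
      ENNReal.toReal_one]

/-- A monotone `Q` that transports `g(u) du` to the Lebesgue measure of `[0,1]` is the primitive
of `g`, because `{Q < Q u} ⊆ (-∞, u] ⊆ {Q ≤ Q u}` and the two outer sets have mass `Q u`. -/
lemma IsUnitDensity.prim_eq_of_map {g Q : ℝ → ℝ} (hg : IsUnitDensity g) (hQ : Monotone Q)
    (h0 : ∀ u, 0 ≤ Q u) (h1 : ∀ u, Q u ≤ 1)
    (hmap : (densMeasure g).map Q = volume.restrict (Icc (0:ℝ) 1)) : prim g = Q := by
  have := hg.isProbabilityMeasure
  funext u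
  have hle : densMeasure g (Q ⁻¹' Iic (Q u)) = ENNReal.ofReal (Q u) := by
    rw [← Measure.map_apply hQ.measurable measurableSet_Iic, hmap, restrict_Iic (h1 u)]
  have hlt : densMeasure g (Q ⁻¹' Iio (Q u)) = ENNReal.ofReal (Q u) := by
    rw [← Measure.map_apply hQ.measurable measurableSet_Iio, hmap,
      measure_congr (Iio_ae_eq_Iic (a := Q u)), restrict_Iic (h1 u)]
  have e : ENNReal.ofReal (prim g u) = ENNReal.ofReal (Q u) := by
    rw [← hg.densMeasure_Iic]
    refine le_antisymm ?_ ?_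
    · rw [← hle]
      exact measure_mono fun v hv => hQ hv
    · rw [← hlt]
      exact measure_mono fun v hv => (hQ.reflect_lt hv).le
  exact (ENNReal.ofReal_eq_ofReal_iff (hg.prim_nonneg u) (h0 u)).1 e

/-- Every probability measure `μ` on `[0,1]` is of the form `(Γ₁)_* dΓ₂`, where `Γ₁` is the
quantile function of `(Leb + μ) / 2`: the graph of the distribution function of `μ`, with its
jumps filled in, is parametrized by `(Γ₁, Γ₂)`. -/
lemma exists_densities (μ : Measure ℝ) [IsProbabilityMeasure μ] (hμ : μ (Icc (0:ℝ) 1)ᶜ = 0) :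
    ∃ g₁ g₂, IsUnitDensity g₁ ∧ IsUnitDensity g₂ ∧ (densMeasure g₂).map (prim g₁) = μ := by
  set l : Measure ℝ := volume.restrict (Icc (0:ℝ) 1) with hl
  have hlp : IsProbabilityMeasure l := ⟨by simp [hl]⟩
  set m : Measure ℝ := (2⁻¹ : ENNReal) • (l + μ) with hm
  have hmp : IsProbabilityMeasure m := ⟨by
    simp only [hm, Measure.smul_apply, Measure.add_apply, measure_univ, smul_eq_mul]
    rw [one_add_one_eq_two, ENNReal.inv_mul_cancel (by simp) (by simp)]⟩
  have hms : m (Icc (0:ℝ) 1)ᶜ = 0 := by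
    have : l (Icc (0:ℝ) 1)ᶜ = 0 := by
      rw [hl, Measure.restrict_apply measurableSet_Icc.compl]
      simp
    simp [hm, hμ, this]
  have hzero : ∀ s, m s = 0 → l s = 0 ∧ μ s = 0 := fun s hs => by
    simpa [hm] using hs
  have hQ := quantile_mono m
  obtain ⟨g₁, h₁, hmap₁⟩ := exists_density_map_eq hQ.measurable (map_quantile m hms)
    (κ := l) (Measure.AbsolutelyContinuous.mk fun s _ hs => (hzero s hs).1)
  obtain ⟨g₂, h₂, hmap₂⟩ := exists_density_map_eq hQ.measurable (map_quantile m hms)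
    (κ := μ) (Measure.AbsolutelyContinuous.mk fun s _ hs => (hzero s hs).2)
  refine ⟨g₁, g₂, h₁, h₂, ?_⟩
  rw [h₁.prim_eq_of_map hQ (quantile_nonneg m) (quantile_le_one m) hmap₁, hmap₂]

/-! ### The two suprema -/

/-- For a bounded measurable `f ≥ 0`, the supremum over `D*` of the one-function matching
functional equals the supremum over `Γ̄ × Γ̄` of the two-function matching functional, with
matching values realized in both directions. -/
theorem sup_singleEnergy_eq_sup_pairEnergy (f : ℝ → ℝ → ℝ)
    (hmeas : Measurable (Function.uncurry f)) (hnonneg : ∀ x y, 0 ≤ f x y)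
    (hbdd : ∃ M : ℝ, ∀ x y, f x y ≤ M) :
    (sSup {r : ℝ | ∃ φ ∈ DStar, r = singleEnergy f φ}
      = sSup {r : ℝ | ∃ γ₁ ∈ GammaBar, ∃ γ₂ ∈ GammaBar, r = pairEnergy f γ₁ γ₂}) ∧
    (∀ φ ∈ DStar, ∃ γ₁ ∈ GammaBar, ∃ γ₂ ∈ GammaBar,
      pairEnergy f γ₁ γ₂ = singleEnergy f φ) ∧
    (∀ γ₁ ∈ GammaBar, ∀ γ₂ ∈ GammaBar, ∃ φ ∈ DStar,
      singleEnergy f φ = pairEnergy f γ₁ γ₂) := by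
  have hto : ∀ φ ∈ DStar, ∃ γ₁ ∈ GammaBar, ∃ γ₂ ∈ GammaBar,
      pairEnergy f γ₁ γ₂ = singleEnergy f φ := by
    rintro φ ⟨μ, hμp, hμ, hφ⟩
    obtain ⟨g₁, g₂, h₁, h₂, hmap⟩ := exists_densities μ hμ
    rw [← hmap] at hφ
    exact ⟨_, h₁.mem_gammaBar, _, h₂.mem_gammaBar, (h₁.singleEnergy_eq f hmeas h₂ hφ).symm⟩
  have hfrom : ∀ γ₁ ∈ GammaBar, ∀ γ₂ ∈ GammaBar, ∃ φ ∈ DStar,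
      singleEnergy f φ = pairEnergy f γ₁ γ₂ := by
    intro γ₁ hγ₁ γ₂ hγ₂
    obtain ⟨g₁, h₁, e₁⟩ := exists_density_of_mem_gammaBar hγ₁
    obtain ⟨g₂, h₂, e₂⟩ := exists_density_of_mem_gammaBar hγ₂
    refine ⟨fun s => (((densMeasure g₂).map (prim g₁)) (Ico (0:ℝ) s)).toReal,
      h₁.map_mem_dStar h₂ fun _ => rfl, ?_⟩
    rw [h₁.singleEnergy_eq f hmeas h₂ fun _ => rfl, pairEnergy_congr f e₁ e₂]
  refine ⟨congrArg sSup (Set.ext fun r => ⟨?_, ?_⟩), hto, hfrom⟩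
  · rintro ⟨φ, hφ, rfl⟩
    obtain ⟨γ₁, hγ₁, γ₂, hγ₂, h⟩ := hto φ hφ
    exact ⟨γ₁, hγ₁, γ₂, hγ₂, h.symm⟩
  · rintro ⟨γ₁, hγ₁, γ₂, hγ₂, rfl⟩
    obtain ⟨φ, hφ, h⟩ := hfrom γ₁ hγ₁ γ₂ hγ₂
    exact ⟨φ, hφ, h.symm⟩
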